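/- Let P be a finite ground program, B ⊆ P a background knowledge, and T a test case (a set of atoms occurring in P). Then the program Γ_P = D*(P) ∪ P_T ∪ P_A is coherent if and only if the program P ∪ P_T is coherent. -/

import Mathlib

/-- A ground disjunctive ASP rule: head atoms, positive body atoms, negative body atoms. -/
structure Rule (α : Type*) where
  head : Finset α
  pos : Finset α
  neg : Finset α

/-- An interpretation `I` satisfies a rule `r`. -/
def satRule {α : Type*} (I : Set α) (r : Rule α) : Prop :=
  ((∀ b ∈ r.pos, b ∈ I) ∧ (∀ b ∈ r.neg, b ∉ I)) → ∃ a ∈ r.head, a ∈ I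

/-- An interpretation `I` satisfies a program. -/
def satProg {α : Type*} (I : Set α) (Prg : Set (Rule α)) : Prop :=
  ∀ r ∈ Prg, satRule I r

/-- The reduct of a program with respect to an interpretation `I`. -/
def reduct {α : Type*} (Prg : Set (Rule α)) (I : Set α) : Set (Rule α) :=
  {r' | ∃ r ∈ Prg, (∀ b ∈ r.neg, b ∉ I) ∧ r' = ⟨r.head, r.pos, ∅⟩}

/-- `I` is an answer set of `Prg`. -/
def isAnswerSet {α : Type*} (Prg : Set (Rule α)) (I : Set α) : Prop :=
  satProg I Prg ∧ ∀ J ⊂ I, ¬ satProg J (reduct Prg I)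

/-- The set of answer sets of a program. -/
def AS {α : Type*} (Prg : Set (Rule α)) : Set (Set α) := {I | isAnswerSet Prg I}

/-- A program is coherent if it has at least one answer set. -/
def coherent {α : Type*} (Prg : Set (Rule α)) : Prop := (AS Prg).Nonempty

/-- The fact `a ←`. -/
def fact {α : Type*} (a : α) : Rule α := ⟨{a}, ∅, ∅⟩

/-- Atom `a` occurs in rule `r`. -/
def occursIn {α : Type*} (a : α) (r : Rule α) : Prop :=
  a ∈ r.head ∨ a ∈ r.pos ∨ a ∈ r.neg

/-- The atoms occurring in a program. -/
def progAtoms {α : Type*} (Prg : Set (Rule α)) : Set α := {a | ∃ r ∈ Prg, occursIn a r}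

/-- The constraint `← not a`. -/
def constraintNot {α : Type*} (a : α) : Rule α := ⟨∅, ∅, {a}⟩

/-- `P_T`: the constraints `← not a` for `a ∈ T`. -/
def PT {α : Type*} (T : Set α) : Set (Rule α) := constraintNot '' T

/-- `P_A`: the facts `a ←` for `a ∈ A`. -/
def PA {α : Type*} (A : Set α) : Set (Rule α) := fact '' A

/-- The extended debugging program `D*(P)` over program `P` and background knowledge `B`,
with marker atoms `d r`, supporting atoms `s a`, and fresh atoms `f x` for `x ∈ A`. -/
def Dstar {α : Type*} [DecidableEq α] (P B : Set (Rule α))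
    (d : Rule α → α) (s : α → α) (f : α → α) (A : Set α) : Set (Rule α) :=
  ((fun r => (⟨r.head, insert (d r) r.pos, r.neg⟩ : Rule α)) '' (P \ B))
  ∪ ((fun a => (⟨{a}, ∅, {s a}⟩ : Rule α)) '' progAtoms P)
  ∪ B
  ∪ ((fun x => (⟨{x, f x}, ∅, ∅⟩ : Rule α)) '' A)

/-!
Once the facts `A` are added, `Dstar P B d s f A` and `P` have the same models `J` of their reducts
with respect to any `I ⊇ J`: the atom `d r` guarding a rule `r` is true, the rule `a ← not s a`
disappears from the reduct because `s a` is true, and `x ∨ f x` is satisfied by the fact `x`. Hence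
`P` may replace `Dstar P B d s f A` without changing the answer sets. Adding facts over
fresh atoms in turn only adds these atoms to every answer set, so `M ↦ M ∪ A` maps the answer
sets of `P ∪ PT T` onto those of the debugging program.
-/

section Reduct

variable {α : Type*} {Prg Prg' : Set (Rule α)} {I I' J J' : Set α}

theorem satProg_reduct_iff :
    satProg J (reduct Prg I) ↔
      ∀ r ∈ Prg, (∀ b ∈ r.neg, b ∉ I) → (∀ b ∈ r.pos, b ∈ J) → ∃ a ∈ r.head, a ∈ J := by
  constructor
  · intro h r hr hneg hpos
    exact h ⟨r.head, r.pos, ∅⟩ ⟨r, hr, hneg, rfl⟩ ⟨hpos, by simp⟩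
  · rintro h _ ⟨r, hr, hneg, rfl⟩ ⟨hpos, -⟩
    exact h r hr hneg hpos

theorem satProg_reduct_self_iff : satProg I (reduct Prg I) ↔ satProg I Prg := by
  rw [satProg_reduct_iff]
  exact forall₂_congr fun r _ => ⟨fun h hb => h hb.2 hb.1, fun h hneg hpos => h ⟨hpos, hneg⟩⟩

theorem satProg_reduct_union_iff :
    satProg J (reduct (Prg ∪ Prg') I) ↔
      satProg J (reduct Prg I) ∧ satProg J (reduct Prg' I) := by
  simp only [satProg_reduct_iff, Set.mem_union, or_imp, forall_and]

theorem satProg_reduct_PA_iff {A : Set α} : satProg J (reduct (PA A) I) ↔ A ⊆ J := by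
  simp [satProg_reduct_iff, PA, fact, Set.subset_def]

theorem satProg_reduct_congr (hI : I ∩ progAtoms Prg = I' ∩ progAtoms Prg)
    (hJ : J ∩ progAtoms Prg = J' ∩ progAtoms Prg) :
    satProg J (reduct Prg I) ↔ satProg J' (reduct Prg I') := by
  have mem_iff {K K' : Set α} (hK : K ∩ progAtoms Prg = K' ∩ progAtoms Prg) {r : Rule α}
      (hr : r ∈ Prg) {a : α} (ha : occursIn a r) : a ∈ K ↔ a ∈ K' := by
    have ha' : a ∈ progAtoms Prg := ⟨r, hr, ha⟩
    simpa only [Set.mem_inter_iff, ha', and_true] using Set.ext_iff.1 hK a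
  rw [satProg_reduct_iff, satProg_reduct_iff]
  refine forall₂_congr fun r hr => imp_congr ?_ (imp_congr ?_ ?_)
  · exact forall₂_congr fun b hb => not_congr (mem_iff hI hr (.inr (.inr hb)))
  · exact forall₂_congr fun b hb => mem_iff hJ hr (.inr (.inl hb))
  · exact exists_congr fun a => and_congr_right fun ha => mem_iff hJ hr (.inl ha)

end Reduct

section AnswerSet

variable {α : Type*} {Prg Prg' : Set (Rule α)} {A I M : Set α}

theorem isAnswerSet_iff_minimal :
    isAnswerSet Prg I ↔ Minimal (fun J => satProg J (reduct Prg I)) I := by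
  rw [Set.minimal_iff_forall_ssubset, satProg_reduct_self_iff]
  rfl

theorem AS_congr
    (h : ∀ I J, J ⊆ I → (satProg J (reduct Prg I) ↔ satProg J (reduct Prg' I))) :
    AS Prg = AS Prg' := by
  ext I
  refine and_congr ?_ (forall₂_congr fun J hJ => not_congr (h I J hJ.subset))
  exact satProg_reduct_self_iff.symm.trans ((h I I subset_rfl).trans satProg_reduct_self_iff)

theorem isAnswerSet.subset_progAtoms (hM : isAnswerSet Prg M) : M ⊆ progAtoms Prg := by
  rw [isAnswerSet_iff_minimal] at hM
  have hsat : satProg (M ∩ progAtoms Prg) (reduct Prg M) :=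
    (satProg_reduct_congr rfl (by rw [Set.inter_assoc, Set.inter_self])).1 hM.prop
  exact (hM.le_of_le hsat Set.inter_subset_left).trans Set.inter_subset_right

theorem isAnswerSet.subset_of_union_PA (hI : isAnswerSet (Prg ∪ PA A) I) : A ⊆ I := by
  have hsat := (isAnswerSet_iff_minimal.1 hI).prop
  exact satProg_reduct_PA_iff.1 (satProg_reduct_union_iff.1 hsat).2

theorem satProg_reduct_union_PA_iff (hA : Disjoint A (progAtoms Prg)) {J : Set α} :
    satProg (J ∪ A) (reduct (Prg ∪ PA A) (I ∪ A)) ↔ satProg J (reduct Prg I) := by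
  have union_inter (K : Set α) : (K ∪ A) ∩ progAtoms Prg = K ∩ progAtoms Prg := by
    rw [Set.union_inter_distrib_right, hA.inter_eq, Set.union_empty]
  rw [satProg_reduct_union_iff, satProg_reduct_PA_iff, and_iff_left Set.subset_union_right]
  exact satProg_reduct_congr (union_inter I) (union_inter J)

theorem isAnswerSet_union_PA_iff (hA : Disjoint A (progAtoms Prg)) (hM : Disjoint M A) :
    isAnswerSet (Prg ∪ PA A) (M ∪ A) ↔ isAnswerSet Prg M := by
  simp only [isAnswerSet_iff_minimal, Minimal, satProg_reduct_union_PA_iff hA]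
  refine and_congr_right fun _ => ⟨fun hmin J hJ hJM => ?_, fun hmin J hJ hJM => ?_⟩
  · have hle := hmin ((satProg_reduct_union_PA_iff hA).2 hJ) (Set.union_subset_union_left A hJM)
    exact hM.subset_left_of_subset_union (Set.subset_union_left.trans hle)
  · have hAJ : A ⊆ J := satProg_reduct_PA_iff.1 (satProg_reduct_union_iff.1 hJ).2
    rw [← Set.sdiff_union_of_subset hAJ, satProg_reduct_union_PA_iff hA] at hJ
    have hMJ : M ⊆ J \ A := hmin hJ (Set.sdiff_subset_iff.2 (hJM.trans_eq (Set.union_comm M A)))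
    exact Set.union_subset (hMJ.trans Set.sdiff_subset) hAJ

theorem AS_union_PA (hA : Disjoint A (progAtoms Prg)) :
    AS (Prg ∪ PA A) = (· ∪ A) '' AS Prg := by
  ext I
  constructor
  · intro hI
    have hIA : I \ A ∪ A = I := Set.sdiff_union_of_subset hI.subset_of_union_PA
    refine ⟨I \ A, (isAnswerSet_union_PA_iff hA Set.disjoint_sdiff_left).1 ?_, hIA⟩
    rwa [hIA]
  · rintro ⟨M, hM, rfl⟩
    have hMA : Disjoint M A := hA.symm.mono_left hM.subset_progAtoms
    exact (isAnswerSet_union_PA_iff hA hMA).2 hM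

end AnswerSet

section Debugging

variable {α : Type*}

theorem progAtoms_union_PT (P : Set (Rule α)) (T : Set α) :
    progAtoms (P ∪ PT T) = progAtoms P ∪ T := by
  ext a
  simp [progAtoms, PT, constraintNot, occursIn, or_and_right, exists_or]

variable [DecidableEq α]

theorem satProg_reduct_Dstar_iff {P B : Set (Rule α)} {d : Rule α → α} {s f : α → α}
    {A I J : Set α} (hBP : B ⊆ P) (hd : ∀ r ∈ P \ B, d r ∈ J)
    (hs : ∀ a ∈ progAtoms P, s a ∈ I) (hA : A ⊆ J) :
    satProg J (reduct (Dstar P B d s f A) I) ↔ satProg J (reduct P I) := by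
  rw [satProg_reduct_iff, satProg_reduct_iff]
  constructor
  · intro h r hr hneg hpos
    by_cases hrB : r ∈ B
    · exact h r (.inl (.inr hrB)) hneg hpos
    · have hguarded : ∀ b ∈ insert (d r) r.pos, b ∈ J :=
        (Finset.forall_mem_insert ..).2 ⟨hd r ⟨hr, hrB⟩, hpos⟩
      exact h ⟨r.head, insert (d r) r.pos, r.neg⟩
        (.inl (.inl (.inl ⟨r, ⟨hr, hrB⟩, rfl⟩))) hneg hguarded
  · rintro h _ (((⟨r, hr, rfl⟩ | ⟨a, ha, rfl⟩) | hr) | ⟨x, hx, rfl⟩) hneg hpos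
    · exact h r hr.1 hneg fun b hb => hpos b (Finset.mem_insert_of_mem hb)
    · exact absurd (hs a ha) (hneg (s a) (Finset.mem_singleton_self _))
    · exact h _ (hBP hr) hneg hpos
    · exact ⟨x, Finset.mem_insert_self .., hA hx⟩

theorem AS_Dstar_union_union_PA {P B : Set (Rule α)} {d : Rule α → α} {s f : α → α}
    {A : Set α} (Q : Set (Rule α)) (hBP : B ⊆ P) (hd : ∀ r ∈ P \ B, d r ∈ A)
    (hs : ∀ a ∈ progAtoms P, s a ∈ A) :
    AS (Dstar P B d s f A ∪ Q ∪ PA A) = AS (P ∪ Q ∪ PA A) := by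
  refine AS_congr fun I J hJI => ?_
  simp only [satProg_reduct_union_iff, satProg_reduct_PA_iff]
  refine and_congr_left fun hAJ => and_congr_left fun _ => ?_
  exact satProg_reduct_Dstar_iff hBP (fun r hr => hAJ (hd r hr))
    (fun a ha => hJI (hAJ (hs a ha))) hAJ

theorem stmt_0_general (P B : Set (Rule α)) (hBP : B ⊆ P) (T : Set α) (hT : T ⊆ progAtoms P)
    (d : Rule α → α) (s f : α → α) (A : Set α) (hA : A = d '' (P \ B) ∪ s '' progAtoms P)
    (hAfresh : Disjoint A (progAtoms P)) :
    AS (Dstar P B d s f A ∪ PT T ∪ PA A) = (· ∪ A) '' AS (P ∪ PT T) := by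
  have hd : ∀ r ∈ P \ B, d r ∈ A := fun r hr => hA ▸ .inl (Set.mem_image_of_mem d hr)
  have hs : ∀ a ∈ progAtoms P, s a ∈ A := fun a ha => hA ▸ .inr (Set.mem_image_of_mem s ha)
  have hfresh : Disjoint A (progAtoms (P ∪ PT T)) := by
    rwa [progAtoms_union_PT, Set.union_eq_self_of_subset_right hT]
  rw [AS_Dstar_union_union_PA (PT T) hBP hd hs, AS_union_PA hfresh]

end Debugging

theorem stmt_0 {α : Type*} [DecidableEq α]
    (P B : Set (Rule α)) (hPfin : P.Finite) (hBP : B ⊆ P)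
    (T : Set α) (hT : T ⊆ progAtoms P)
    (d : Rule α → α) (s : α → α) (f : α → α)
    (A : Set α) (hA : A = d '' (P \ B) ∪ s '' progAtoms P)
    (hdinj : Set.InjOn d (P \ B))
    (hsinj : Set.InjOn s (progAtoms P))
    (hfinj : Set.InjOn f A)
    (hds : Disjoint (d '' (P \ B)) (s '' progAtoms P))
    (hAf : Disjoint A (f '' A))
    (hAfresh : Disjoint A (progAtoms P))
    (hfAfresh : Disjoint (f '' A) (progAtoms P)) :
    coherent (Dstar P B d s f A ∪ PT T ∪ PA A) ↔ coherent (P ∪ PT T) := by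
  rw [coherent, coherent, stmt_0_general P B hBP T hT d s f A hA hAfresh, Set.image_nonempty]
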